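/- Let p_i, p_j, p_k be distinct odd primes and M = p_i^2 p_j^2 p_k^2. If A ⊆ ℤ_M tiles ℤ_M by translations, i.e., there exists B ⊆ ℤ_M with A ⊕ B = ℤ_M, then A is spectral in ℤ_M. -/

import Mathlib

open Polynomial

/-- The mask polynomial `A(X) = Σ_{a ∈ A} X^a` of a finite subset of `ZMod M`,
using the representatives in `{0, …, M-1}`. -/
noncomputable def maskPoly (M : ℕ) (A : Finset (ZMod M)) : Polynomial ℤ :=
  ∑ a ∈ A, X ^ a.val

/-- `Φ_s | A` : the `s`-th cyclotomic polynomial divides the mask polynomial of `A` in `ℤ[X]`. -/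
def cycDvd (M s : ℕ) (A : Finset (ZMod M)) : Prop :=
  cyclotomic s ℤ ∣ maskPoly M A

/-- `A ⊕ B = ℤ_M` : every element of `ℤ_M` has a unique representation `a + b`
with `a ∈ A` and `b ∈ B`. -/
def IsTiling (M : ℕ) (A B : Set (ZMod M)) : Prop :=
  ∀ z : ZMod M, ∃! ab : ZMod M × ZMod M, ab.1 ∈ A ∧ ab.2 ∈ B ∧ ab.1 + ab.2 = z

/-- The Coven–Meyerowitz property (T2): whenever `s_1, …, s_m` are prime powers dividing `M`,
powers of pairwise distinct primes, with `Φ_{s_t} | A` for each `t`, then `Φ_{s_1 ⋯ s_m} | A`. -/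
def SatisfiesT2 (M : ℕ) (A : Finset (ZMod M)) : Prop :=
  ∀ (P : Finset ℕ) (e : ℕ → ℕ), P.Nonempty →
    (∀ p ∈ P, p.Prime ∧ 1 ≤ e p ∧ p ^ e p ∣ M ∧ cycDvd M (p ^ e p) A) →
    cycDvd M (∏ p ∈ P, p ^ e p) A

/-- The `D`-grid through `x` in `ZMod M` : `Λ(x, D) = {y : D ∣ y - x}`. -/
def gridSet (M : ℕ) (x : ZMod M) (D : ℕ) : Set (ZMod M) :=
  {y : ZMod M | (D : ZMod M) ∣ (y - x)}

/-- `S` is fibered in the `p` direction on scale `M`: every element of `S` has its whole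
fiber `Λ(s, M/p)` contained in `S`. -/
def Fibered (M p : ℕ) (S : Set (ZMod M)) : Prop :=
  ∀ s ∈ S, gridSet M s (M / p) ⊆ S

/-- `Div_N(S)` : the set of values `(s - s', N) = gcd(s - s', N)` for `s, s' ∈ S`. -/
def DivSet (M N : ℕ) (S : Set (ZMod M)) : Set ℕ :=
  {m : ℕ | ∃ s ∈ S, ∃ s' ∈ S, Nat.gcd (s - s').val N = m}

/-- `A ⊆ ℤ_M` is spectral: there is `L ⊆ ℤ_M` with `|L| = |A|` whose characters are
pairwise orthogonal on `A`. -/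
def IsSpectral (M : ℕ) (A : Finset (ZMod M)) : Prop :=
  ∃ L : Finset (ZMod M), L.card = A.card ∧
    ∀ l ∈ L, ∀ l' ∈ L, l ≠ l' →
      (∑ a ∈ A,
        Complex.exp (2 * (Real.pi : ℂ) * Complex.I * (((l - l') * a).val : ℂ) / (M : ℂ))) = 0

/-! ### Indexed tilings -/

/-- Indexed tiling. -/
def Til {G ι κ : Type} [AddCommGroup G] (a : ι → G) (b : κ → G) : Prop :=
  Function.Bijective (fun x : ι × κ => a x.1 + b x.2)

/-- basis element of the group algebra -/
noncomputable def ge (p : ℕ) {G : Type} (g : G) : AddMonoidAlgebra (ZMod p) G :=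
  AddMonoidAlgebra.single g 1

theorem ge_mul (p : ℕ) {G : Type} [AddCommGroup G] (g h : G) :
    ge p g * ge p h = ge p (g + h) := by
  simp [ge, AddMonoidAlgebra.single_mul_single]

theorem ge_pow (p : ℕ) {G : Type} [AddCommGroup G] (g : G) (n : ℕ) :
    ge p g ^ n = ge p (n • g) := by
  simp [ge, AddMonoidAlgebra.single_pow]

theorem coeff_sum_ge (p : ℕ) {G ι : Type} [AddCommGroup G] [DecidableEq G] (s : Finset ι)
    (v : ι → G) (z : G) :
    (∑ i ∈ s, ge p (v i)).coeff z = ((s.filter (fun i => v i = z)).card : ZMod p) := by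
  simp [AddMonoidAlgebra.coeff_sum, ge, Finsupp.finsetSum_apply, Finsupp.single_apply,
    Finset.sum_boole]

theorem ga_charP (p : ℕ) [Fact p.Prime] {G : Type} [AddCommGroup G] :
    CharP (AddMonoidAlgebra (ZMod p) G) p :=
  charP_of_injective_algebraMap (algebraMap (ZMod p) (AddMonoidAlgebra (ZMod p) G)).injective p

theorem sum_ge_pow (p : ℕ) [Fact p.Prime] {G ι : Type} [AddCommGroup G] (s : Finset ι)
    (v : ι → G) : (∑ i ∈ s, ge p (v i)) ^ p = ∑ i ∈ s, ge p (p • v i) := by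
  have := ga_charP p (G := G)
  have : ExpChar (AddMonoidAlgebra (ZMod p) G) p := ExpChar.prime Fact.out
  rw [sum_pow_char p s]
  simp [ge_pow]

/-- all ones element -/
noncomputable def gone (p : ℕ) (G : Type) [Fintype G] : AddMonoidAlgebra (ZMod p) G :=
  ∑ g : G, ge p g

theorem ge_mul_gone (p : ℕ) {G : Type} [AddCommGroup G] [Fintype G] (g : G) :
    ge p g * gone p G = gone p G := by
  unfold gone
  rw [Finset.mul_sum]
  simp only [ge_mul]
  exact Equiv.sum_comp (Equiv.addLeft g) (fun x => ge p x)

theorem sum_ge_mul_gone (p : ℕ) {G ι : Type} [AddCommGroup G] [Fintype G] (s : Finset ι)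
    (v : ι → G) : (∑ i ∈ s, ge p (v i)) * gone p G = (s.card : ZMod p) • gone p G := by
  rw [Finset.sum_mul]
  simp [ge_mul_gone, Nat.cast_smul_eq_nsmul]

theorem coeff_gone (p : ℕ) {G : Type} [AddCommGroup G] [Fintype G] (z : G) :
    (gone p G).coeff z = 1 := by
  classical
  have h := coeff_sum_ge p Finset.univ (fun g : G => g) z
  unfold gone
  rw [h]
  have h2 : (Finset.univ.filter (fun i : G => i = z)) = {z} := by ext; simp
  rw [h2]
  simp

theorem sum_ge_pow_mul_gone (p : ℕ) {G ι : Type} [AddCommGroup G] [Fintype G] (s : Finset ι)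
    (v : ι → G) (n : ℕ) :
    (∑ i ∈ s, ge p (v i)) ^ n * gone p G = ((s.card : ZMod p) ^ n) • gone p G := by
  induction n with
  | zero => simp
  | succ n ih => rw [pow_succ, mul_assoc, sum_ge_mul_gone, mul_smul_comm, ih, smul_smul, pow_succ,
      mul_comm]

theorem Til.card {G ι κ : Type} [AddCommGroup G] [Fintype G] [Fintype ι] [Fintype κ]
    {a : ι → G} {b : κ → G} (h : Til a b) : Fintype.card ι * Fintype.card κ = Fintype.card G := by
  rw [← Fintype.card_prod]
  exact Fintype.card_of_bijective h

theorem Til.symm {G ι κ : Type} [AddCommGroup G]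
    {a : ι → G} {b : κ → G} (h : Til a b) : Til b a := by
  have : (fun x : κ × ι => b x.1 + a x.2) =
      (fun x : ι × κ => a x.1 + b x.2) ∘ (Equiv.prodComm κ ι) := by
    funext x; simp [add_comm]
  unfold Til
  rw [this]
  exact h.comp (Equiv.bijective _)

theorem Til.dil_prime {G ι κ : Type} [AddCommGroup G] [Fintype G] [Fintype ι] [Fintype κ]
    {a : ι → G} {b : κ → G} (h : Til a b) (q : ℕ) (hq : q.Prime)
    (hc : ¬ q ∣ Fintype.card G) : Til a (fun j => q • b j) := by
  classical
  have : Fact q.Prime := ⟨hq⟩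
  unfold Til
  rw [Fintype.bijective_iff_surjective_and_card]
  refine ⟨?_, by rw [Fintype.card_prod]; exact h.card⟩
  intro z
  have h1 : (∑ i, ge q (a i)) * (∑ j, ge q (b j)) = gone q G := by
    rw [Finset.sum_mul_sum, ← Finset.sum_product']
    simp only [ge_mul]
    exact h.sum_comp (fun g => ge q g)
  have h2 : (∑ i, ge q (a i)) * (∑ j, ge q (q • b j)) =
      ((Fintype.card κ : ZMod q) ^ (q - 1)) • gone q G := by
    rw [← sum_ge_pow q Finset.univ b]
    obtain ⟨m, rfl⟩ : ∃ m, q = m + 1 := ⟨q - 1, by have := hq.pos; omega⟩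
    rw [pow_succ', ← mul_assoc, h1, mul_comm, sum_ge_pow_mul_gone]
    simp
  have h3 := congrArg (fun x => x.coeff z) h2
  rw [Finset.sum_mul_sum, ← Finset.sum_product'] at h3
  simp only [ge_mul] at h3
  rw [coeff_sum_ge, AddMonoidAlgebra.coeff_smul_apply, coeff_gone, smul_eq_mul, mul_one] at h3
  by_contra hno
  push Not at hno
  rw [Finset.filter_false_of_mem] at h3
  · simp only [Finset.card_empty, Nat.cast_zero] at h3
    have h4 : (Fintype.card κ : ZMod q) = 0 := by
      by_contra hne
      exact pow_ne_zero _ hne h3.symm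
    rw [ZMod.natCast_eq_zero_iff] at h4
    exact hc (h.card ▸ Dvd.dvd.mul_left h4 _)
  · intro x _
    exact hno x

theorem Til.dil {G κ : Type} [AddCommGroup G] [Fintype G] [Fintype κ]
    (r : ℕ) (hr : r.Coprime (Fintype.card G)) : ∀ {ι : Type} [Fintype ι]
    {a : ι → G} {b : κ → G} (_ : Til a b), Til a (fun j => r • b j) := by
  induction r using Nat.recOnMul with
  | zero =>
    intro ι _ a b h
    have hG : Fintype.card G = 1 := by simpa using hr
    have : Subsingleton G := (Fintype.card_le_one_iff_subsingleton).1 hG.le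
    convert h using 2
  | one => intro ι _ a b h; simpa using h
  | prime p hp =>
    intro ι _ a b h
    exact h.dil_prime p hp ((Nat.Prime.coprime_iff_not_dvd hp).1 hr)
  | mul x y hx hy =>
    intro ι _ a b h
    have h1 := hx (Nat.Coprime.coprime_mul_right hr) (hy (Nat.Coprime.coprime_mul_left hr) h)
    simpa [mul_smul] using h1

theorem exists_unit_aux (p n : ℕ) (hp : p.Prime) (u v : ℤ)
    (hu : ¬ ((p : ℤ) ^ (n + 1) ∣ u)) (hv : ¬ ((p : ℤ) ^ (n + 1) ∣ v))
    (huv : (p : ℤ) ^ n ∣ u + v) :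
    ∃ r : ℕ, r.Coprime (p ^ (n + 1)) ∧ (p : ℤ) ^ (n + 1) ∣ u + r * v := by
  have hp' : Prime (p : ℤ) := Nat.prime_iff_prime_int.1 hp
  have hu0 : u ≠ 0 := fun h => hu (h ▸ dvd_zero _)
  have hv0 : v ≠ 0 := fun h => hv (h ▸ dvd_zero _)
  have hfu : FiniteMultiplicity (p : ℤ) u :=
    Int.finiteMultiplicity_iff.2 ⟨by simpa using hp.one_lt.ne', hu0⟩
  have hfv : FiniteMultiplicity (p : ℤ) v :=
    Int.finiteMultiplicity_iff.2 ⟨by simpa using hp.one_lt.ne', hv0⟩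
  obtain ⟨u0, hu1, hu2⟩ := hfu.exists_eq_pow_mul_and_not_dvd
  obtain ⟨v0, hv1, hv2⟩ := hfv.exists_eq_pow_mul_and_not_dvd
  set α := multiplicity (p : ℤ) u
  set β := multiplicity (p : ℤ) v
  have hα : α ≤ n := by
    by_contra hc
    exact hu (hu1 ▸ Dvd.dvd.mul_right (pow_dvd_pow _ (by omega)) _)
  have hβ : β ≤ n := by
    by_contra hc
    exact hv (hv1 ▸ Dvd.dvd.mul_right (pow_dvd_pow _ (by omega)) _)
  have key : ∀ (α β : ℕ) (u v u0 v0 : ℤ), u = (p : ℤ) ^ α * u0 → v = (p : ℤ) ^ β * v0 →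
      ¬ (p : ℤ) ∣ v0 → α ≤ n → (p : ℤ) ^ n ∣ u + v → α ≤ β := by
    intro α β u v u0 v0 h1 h2 h3 h4 h5
    by_contra hc
    push Not at hc
    have h6 : (p : ℤ) ^ (β + 1) ∣ v := by
      have : (p : ℤ) ^ (β + 1) ∣ u := h1 ▸ Dvd.dvd.mul_right (pow_dvd_pow _ (by omega)) _
      exact (dvd_add_right this).1 ((pow_dvd_pow _ (by omega)).trans h5)
    rw [h2, pow_succ] at h6
    exact h3 ((mul_dvd_mul_iff_left (pow_ne_zero _ hp'.ne_zero)).1 h6)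
  have hab : α = β := le_antisymm (key α β u v u0 v0 hu1 hv1 hv2 hα huv)
    (key β α v u v0 u0 hv1 hu1 hu2 hβ (by rwa [add_comm]))
  have hcop : ∀ w : ℤ, ¬ (p : ℤ) ∣ w → IsCoprime w ((p : ℤ) ^ (n + 1)) := fun w hw =>
    IsCoprime.pow_right ((hp'.coprime_iff_not_dvd.2 hw).symm)
  obtain ⟨s, t, hst⟩ := hcop v0 hv2
  have : NeZero (p ^ (n + 1)) := ⟨pow_ne_zero _ hp.ne_zero⟩
  refine ⟨((-u0 * s : ℤ) : ZMod (p ^ (n + 1))).val, ?_, ?_⟩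
  · have h1 : ((-u0 * s : ℤ) : ZMod (p ^ (n + 1))).val.Coprime (p ^ (n + 1)) := by
      have hun : IsUnit ((-u0 * s : ℤ) : ZMod (p ^ (n + 1))) := by
        have : IsCoprime (-u0 * s) ((p : ℤ) ^ (n + 1)) := by
          refine IsCoprime.mul_left (hcop u0 hu2).neg_left ⟨v0, t, ?_⟩
          rw [← hst]; ring
        obtain ⟨x, y, hxy⟩ := this
        refine IsUnit.of_mul_eq_one (x : ZMod (p ^ (n + 1))) ?_
        have := congrArg (fun z : ℤ => (z : ZMod (p ^ (n + 1)))) hxy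
        have hz : ((p : ZMod (p ^ (n + 1))) ^ (n + 1)) = 0 := by
          have := ZMod.natCast_self (p ^ (n + 1))
          push_cast at this; exact this
        push_cast at this ⊢
        rw [hz] at this
        rw [← this]; ring
      have := ZMod.val_coe_unit_coprime hun.unit
      simpa using this
    exact h1
  · have h1 : (p : ℤ) ^ (n + 1) ∣ ((((-u0 * s : ℤ) : ZMod (p ^ (n + 1))).val : ℤ) - (-u0 * s)) := by
      have := (ZMod.intCast_zmod_eq_zero_iff_dvd
        ((((-u0 * s : ℤ) : ZMod (p ^ (n + 1))).val : ℤ) - (-u0 * s)) (p ^ (n + 1))).1 (by simp)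
      exact_mod_cast this
    obtain ⟨w, hw⟩ := h1
    have h2 : ((((-u0 * s : ℤ) : ZMod (p ^ (n + 1))).val : ℤ)) = -u0 * s + p ^ (n + 1) * w := by
      linarith
    rw [h2, hu1, hv1, ← hab]
    refine ⟨p ^ α * u0 * t + w * p ^ α * v0, ?_⟩
    linear_combination (p : ℤ) ^ α * u0 * (-hst)
set_option linter.unusedSectionVars false

/-! ### Lines and colours -/

/-- `(i,j)` lies over the line `(c,y)`. -/
def Ln {X Xb Y ι κ : Type} [AddCommGroup X] [AddCommGroup Xb] [AddCommGroup Y]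
    (h : X →+ Xb) (a : ι → X × Y) (b : κ → X × Y) (c : Xb) (y : Y) (i : ι) (j : κ) : Prop :=
  h (a i).1 + h (b j).1 = c ∧ (a i).2 + (b j).2 = y

/-- The `b`-component is constant on the line `(c,y)`. -/
def BC {X Xb Y ι κ : Type} [AddCommGroup X] [AddCommGroup Xb] [AddCommGroup Y]
    (h : X →+ Xb) (a : ι → X × Y) (b : κ → X × Y) (c : Xb) (y : Y) : Prop :=
  ∀ i j i' j', Ln h a b c y i j → Ln h a b c y i' j' → (b j).1 = (b j').1

theorem Ln.symm {X Xb Y ι κ : Type} [AddCommGroup X] [AddCommGroup Xb] [AddCommGroup Y]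
    {h : X →+ Xb} {a : ι → X × Y} {b : κ → X × Y} {c : Xb} {y : Y} {i : ι} {j : κ}
    (H : Ln h a b c y i j) : Ln h b a c y j i :=
  ⟨by rw [add_comm]; exact H.1, by rw [add_comm]; exact H.2⟩

/-- A tiling with the splitting property. -/
structure Setup {X Xb Y ι κ : Type} [AddCommGroup X] [AddCommGroup Xb] [AddCommGroup Y]
    [Fintype X] [DecidableEq Xb] (p : ℕ)
    (h : X →+ Xb) (a : ι → X × Y) (b : κ → X × Y) : Prop where
  til : Til a b
  spl : ∀ i j i' j' c y, Ln h a b c y i j → Ln h a b c y i' j' → ¬ (i = i' ∧ j = j') →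
    (((a i).1 = (a i').1 ∧ (b j).1 ≠ (b j').1) ∨ ((a i).1 ≠ (a i').1 ∧ (b j).1 = (b j').1))
  fib : ∀ c, (Finset.univ.filter (fun x => h x = c)).card = p

section
variable {X Xb Y ι κ : Type} [AddCommGroup X] [AddCommGroup Xb] [AddCommGroup Y]
    [Fintype X] [DecidableEq Xb] [DecidableEq X] [DecidableEq Y] [Fintype Y]
    [Fintype ι] [Fintype κ] {p : ℕ}
    {h : X →+ Xb} {a : ι → X × Y} {b : κ → X × Y}

theorem Setup.symm (S : Setup p h a b) : Setup p h b a where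
  til := S.til.symm
  spl := by
    intro i j i' j' c y h1 h2 h3
    have := S.spl j i j' i' c y h1.symm h2.symm (fun hh => h3 ⟨hh.2, hh.1⟩)
    tauto
  fib := S.fib

theorem Setup.cardP (S : Setup p h a b) (c : Xb) (y : Y) :
    (Finset.univ.filter (fun q : ι × κ => h (a q.1).1 + h (b q.2).1 = c ∧
      (a q.1).2 + (b q.2).2 = y)).card = p := by
  rw [← S.fib c]
  refine Finset.card_bij (fun q _ => (a q.1).1 + (b q.2).1) ?_ ?_ ?_
  · intro q hq
    simp only [Finset.mem_filter, Finset.mem_univ, true_and] at hq ⊢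
    rw [map_add]; exact hq.1
  · intro q hq q' hq' e
    simp only [Finset.mem_filter, Finset.mem_univ, true_and] at hq hq'
    exact S.til.1 (Prod.ext e (hq.2.trans hq'.2.symm))
  · intro x hx
    simp only [Finset.mem_filter, Finset.mem_univ, true_and] at hx
    obtain ⟨q, hq⟩ := S.til.2 (x, y)
    have h1 := congrArg Prod.fst hq
    have h2 := congrArg Prod.snd hq
    simp only [Prod.fst_add, Prod.snd_add] at h1 h2
    refine ⟨q, ?_, h1⟩
    simp only [Finset.mem_filter, Finset.mem_univ, true_and]
    exact ⟨by rw [← map_add, h1, hx], h2⟩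

theorem Setup.exists_ln (S : Setup p h a b) (hp : p.Prime) (c : Xb) (y : Y) :
    ∃ i j, Ln h a b c y i j := by
  have := S.cardP c y
  have h2 : 0 < p := hp.pos
  rw [← this, Finset.card_pos] at h2
  obtain ⟨q, hq⟩ := h2
  simp only [Finset.mem_filter, Finset.mem_univ, true_and] at hq
  exact ⟨q.1, q.2, hq⟩

theorem Setup.dich (S : Setup p h a b) (c : Xb) (y : Y) : BC h a b c y ∨ BC h b a c y := by
  by_contra hc
  push Not at hc
  obtain ⟨h1, h2⟩ := hc
  simp only [BC, not_forall] at h1 h2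
  obtain ⟨i, j, i', j', l1, l2, n1⟩ := h1
  obtain ⟨s, r, s', r', l3, l4, n2⟩ := h2
  have l3 := l3.symm
  have l4 := l4.symm
  have e : (a i).1 = (a i').1 := by
    rcases S.spl i j i' j' c y l1 l2 (fun hh => n1 (by rw [hh.2])) with hh | hh
    · exact hh.1
    · exact absurd hh.2 n1
  have key : ∀ i1 j1, Ln h a b c y i1 j1 → (a i1).1 = (a i).1 := by
    intro i1 j1 l
    by_contra hne
    have e1 := S.spl i1 j1 i j c y l l1 (fun hh => hne (by rw [hh.1]))
    have e2 := S.spl i1 j1 i' j' c y l l2 (fun hh => hne (by rw [hh.1, e]))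
    have f1 : (b j1).1 = (b j).1 := by tauto
    have f2 : (b j1).1 = (b j').1 := by
      rcases e2 with hh | hh
      · exact absurd (hh.1.trans e.symm) hne
      · exact hh.2
    exact n1 (f1.symm.trans f2)
  exact n2 ((key _ _ l3).trans (key _ _ l4).symm)

theorem Setup.excl (S : Setup p h a b) (hp : p.Prime) (c : Xb) (y : Y) :
    ¬ (BC h a b c y ∧ BC h b a c y) := by
  rintro ⟨h1, h2⟩
  have hc : 1 < (Finset.univ.filter (fun q : ι × κ => h (a q.1).1 + h (b q.2).1 = c ∧
      (a q.1).2 + (b q.2).2 = y)).card := by rw [S.cardP c y]; exact hp.one_lt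
  obtain ⟨q, hq, q', hq', hne⟩ := Finset.one_lt_card.1 hc
  simp only [Finset.mem_filter, Finset.mem_univ, true_and] at hq hq'
  have l1 : Ln h a b c y q.1 q.2 := hq
  have l2 : Ln h a b c y q'.1 q'.2 := hq'
  have e1 := h1 _ _ _ _ l1 l2
  have e2 := h2 _ _ _ _ l1.symm l2.symm
  have := S.spl _ _ _ _ c y l1 l2 (fun hh => hne (Prod.ext hh.1 hh.2))
  tauto

theorem Setup.sweep (S : Setup p h a b) {c : Xb} {y : Y} (H : BC h a b c y) {i : ι} {j : κ}
    (l : Ln h a b c y i j) (x : X) (hx : h x = h (a i).1) :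
    ∃ i' j', Ln h a b c y i' j' ∧ (a i').1 = x := by
  obtain ⟨q, hq⟩ := S.til.2 (x + (b j).1, y)
  have h1 := congrArg Prod.fst hq
  have h2 := congrArg Prod.snd hq
  simp only [Prod.fst_add, Prod.snd_add] at h1 h2
  have l' : Ln h a b c y q.1 q.2 := ⟨by rw [← map_add, h1, map_add, hx]; exact l.1, h2⟩
  refine ⟨q.1, q.2, l', ?_⟩
  have := H _ _ _ _ l l'
  rw [this] at h1
  exact add_right_cancel h1

/-- relative product -/
noncomputable def RelP (p : ℕ) (h : X →+ Xb) (a : ι → X × Y) (b : κ → X × Y) (σ : Xb → X) (c : Xb) :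
    AddMonoidAlgebra (ZMod p) Y :=
  ∑ q ∈ Finset.univ.filter (fun q : ι × κ => h (a q.1).1 + h (b q.2).1 = c ∧
    σ (h (a q.1).1) = (a q.1).1), ge p ((a q.1).2 + (b q.2).2)

open Classical in
theorem Setup.coeffRelP (S : Setup p h a b) (hp : p.Prime) (σ : Xb → X)
    (hσ : ∀ c, h (σ c) = c) (c : Xb) (y : Y) :
    (RelP p h a b σ c).coeff y = if BC h a b c y then 1 else 0 := by
  unfold RelP
  rw [coeff_sum_ge, Finset.filter_filter]
  split_ifs with H
  · have : (Finset.univ.filter (fun q : ι × κ => (h (a q.1).1 + h (b q.2).1 = c ∧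
      σ (h (a q.1).1) = (a q.1).1) ∧ (a q.1).2 + (b q.2).2 = y)).card = 1 := by
      rw [Finset.card_eq_one]
      obtain ⟨i, j, l⟩ := S.exists_ln hp c y
      obtain ⟨i', j', l', hx⟩ := S.sweep H l (σ (h (a i).1)) (hσ _)
      refine ⟨(i', j'), ?_⟩
      ext q
      simp only [Finset.mem_filter, Finset.mem_univ, true_and, Finset.mem_singleton]
      constructor
      · rintro ⟨⟨e1, e2⟩, e3⟩
        have lq : Ln h a b c y q.1 q.2 := ⟨e1, e3⟩
        have eb := H _ _ _ _ lq l'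
        have eb2 := H _ _ _ _ lq l
        have eh : h (a q.1).1 = h (a i).1 := by
          have := lq.1.trans l.1.symm
          rw [eb2] at this
          exact add_right_cancel this
        have ea : (a q.1).1 = (a i').1 := by rw [hx, ← eh, e2]
        by_contra hne
        have := S.spl _ _ _ _ c y lq l' (fun hh => hne (Prod.ext hh.1 hh.2))
        tauto
      · rintro rfl
        refine ⟨⟨l'.1, ?_⟩, l'.2⟩
        simp only
        rw [hx, hσ]
    rw [this]; simp
  · have H' : BC h b a c y := (S.dich c y).resolve_left H
    by_cases hex : ∃ i j, Ln h a b c y i j ∧ σ (h (a i).1) = (a i).1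
    · obtain ⟨i, j, l, e⟩ := hex
      have : (Finset.univ.filter (fun q : ι × κ => (h (a q.1).1 + h (b q.2).1 = c ∧
        σ (h (a q.1).1) = (a q.1).1) ∧ (a q.1).2 + (b q.2).2 = y)) =
        (Finset.univ.filter (fun q : ι × κ => h (a q.1).1 + h (b q.2).1 = c ∧
        (a q.1).2 + (b q.2).2 = y)) := by
        ext q
        simp only [Finset.mem_filter, Finset.mem_univ, true_and]
        constructor
        · tauto
        · intro lq
          have lq' : Ln h a b c y q.1 q.2 := lq
          have := H' _ _ _ _ lq'.symm l.symm
          exact ⟨⟨lq.1, by rw [this, e]⟩, lq.2⟩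
      rw [this, S.cardP c y]
      simp
    · rw [Finset.filter_false_of_mem]
      · simp
      · rintro q _ ⟨⟨e1, e2⟩, e3⟩
        exact hex ⟨q.1, q.2, ⟨e1, e3⟩, e2⟩

/-- class sum -/
noncomputable def Abar (p : ℕ) (h : X →+ Xb) (a : ι → X × Y) (u : Xb) :
    AddMonoidAlgebra (ZMod p) Y :=
  ∑ i ∈ Finset.univ.filter (fun i => h (a i).1 = u), ge p (a i).2

theorem Setup.class_const (S : Setup p h a b) {c : Xb} {y : Y} {i i' : ι} {j j' : κ}
    (l : Ln h a b c y i j) (l' : Ln h a b c y i' j') :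
    h (a i).1 = h (a i').1 ∧ h (b j).1 = h (b j').1 := by
  rcases S.dich c y with H | H
  · have e := H _ _ _ _ l l'
    have := l.1.trans l'.1.symm
    rw [e] at this ⊢
    exact ⟨add_right_cancel this, rfl⟩
  · have e := H _ _ _ _ l.symm l'.symm
    have := l.1.trans l'.1.symm
    rw [e] at this ⊢
    exact ⟨rfl, add_left_cancel this⟩

theorem Setup.Abar_mul (S : Setup p h a b) (u v : Xb) : Abar p h a u * Abar p h b v = 0 := by
  ext y
  unfold Abar
  rw [Finset.sum_mul_sum, ← Finset.sum_product']
  simp only [ge_mul]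
  rw [coeff_sum_ge]
  simp only [AddMonoidAlgebra.coeff_zero, Finsupp.coe_zero, Pi.zero_apply]
  by_cases hex : ∃ i j, h (a i).1 = u ∧ h (b j).1 = v ∧ (a i).2 + (b j).2 = y
  · obtain ⟨i, j, e1, e2, e3⟩ := hex
    have l : Ln h a b (u + v) y i j := ⟨by rw [e1, e2], e3⟩
    have : ((Finset.univ.filter (fun i => h (a i).1 = u)) ×ˢ
        (Finset.univ.filter (fun j => h (b j).1 = v))).filter
          (fun q => (a q.1).2 + (b q.2).2 = y) =
        (Finset.univ.filter (fun q : ι × κ => h (a q.1).1 + h (b q.2).1 = u + v ∧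
        (a q.1).2 + (b q.2).2 = y)) := by
      ext q
      simp only [Finset.mem_filter, Finset.mem_univ, true_and, Finset.mem_product]
      constructor
      · rintro ⟨⟨f1, f2⟩, f3⟩
        exact ⟨by rw [f1, f2], f3⟩
      · intro lq
        have lq' : Ln h a b (u + v) y q.1 q.2 := lq
        have := S.class_const lq' l
        rw [e1, e2] at this
        exact ⟨this, lq.2⟩
    rw [this, S.cardP]
    simp
  · rw [Finset.filter_false_of_mem]
    · simp
    · intro q hq e
      simp only [Finset.mem_filter, Finset.mem_univ, true_and, Finset.mem_product] at hq
      exact hex ⟨q.1, q.2, hq.1, hq.2, e⟩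

theorem RelP_eq (σ : Xb → X) (c : Xb) : RelP p h a b σ c =
    ∑ i ∈ Finset.univ.filter (fun i => σ (h (a i).1) = (a i).1),
      ge p (a i).2 * Abar p h b (c - h (a i).1) := by
  unfold RelP Abar
  simp only [Finset.mul_sum, ge_mul]
  rw [Finset.sum_sigma']
  refine Finset.sum_bij' (fun q _ => ⟨q.1, q.2⟩) (fun q _ => (q.1, q.2)) ?_ ?_ ?_ ?_ ?_
  · intro q hq
    simp only [Finset.mem_filter, Finset.mem_univ, true_and, Finset.mem_sigma] at hq ⊢
    exact ⟨hq.2, by rw [← hq.1]; abel⟩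
  · intro q hq
    simp only [Finset.mem_filter, Finset.mem_univ, true_and, Finset.mem_sigma] at hq ⊢
    exact ⟨by rw [hq.2]; abel, hq.1⟩
  · intros; rfl
  · intros; rfl
  · intros; rfl

theorem Setup.RelP_mul (S : Setup p h a b) (σ : Xb → X) (c c' : Xb) :
    RelP p h a b σ c * RelP p h b a σ c' = 0 := by
  rw [RelP_eq, RelP_eq, Finset.sum_mul_sum]
  refine Finset.sum_eq_zero fun i _ => Finset.sum_eq_zero fun j _ => ?_
  have := S.symm.Abar_mul (c - h (a i).1) (c' - h (b j).1)
  rw [mul_mul_mul_comm, this, mul_zero]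

theorem Setup.uniform (S : Setup p h a b) (hp : p.Prime) (hs : Function.Surjective h)
    (hY : ¬ p ∣ Fintype.card Y) :
    (∀ c y, BC h a b c y) ∨ (∀ c y, BC h b a c y) := by
  classical
  have : Fact p.Prime := ⟨hp⟩
  obtain ⟨σ, hσ⟩ := hs.hasRightInverse
  have hsum : ∀ c, RelP p h a b σ c + RelP p h b a σ c = gone p Y := by
    intro c
    ext y
    rw [AddMonoidAlgebra.coeff_add, Finsupp.add_apply, S.coeffRelP hp σ hσ, S.symm.coeffRelP hp σ hσ,
      coeff_gone]
    have h1 := S.dich c y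
    have h2 := S.excl hp c y
    split_ifs <;> first | tauto | simp
  have hR : ∀ c, RelP p h a b σ c = ∑ y ∈ Finset.univ.filter (fun y => BC h a b c y), ge p y := by
    intro c
    ext y
    have := coeff_sum_ge p (Finset.univ.filter (fun y => BC h a b c y)) (fun y : Y => y) y
    rw [this, S.coeffRelP hp σ hσ, Finset.filter_filter]
    split_ifs with H
    · have : (Finset.univ.filter (fun z => BC h a b c z ∧ z = y)) = {y} := by
        ext z
        simp only [Finset.mem_filter, Finset.mem_univ, true_and, Finset.mem_singleton]
        constructor
        · tauto
        · rintro rfl; exact ⟨H, rfl⟩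
      rw [this]; simp
    · rw [Finset.filter_false_of_mem]
      · simp
      · rintro z _ ⟨h1, rfl⟩; exact H h1
  have hcop : (Nat.card Y).Coprime p := by
    rw [Nat.card_eq_fintype_card]
    exact ((Nat.Prime.coprime_iff_not_dvd hp).2 hY).symm
  have hinj : ∀ y z : Y, p • y = p • z → y = z := by
    intro y z e
    exact (nsmulCoprime hcop).injective e
  have hall : ∀ c, (∃ y, BC h a b c y) → ∀ y, BC h a b c y := by
    intro c ⟨y0, h0⟩ y1
    set F := Finset.univ.filter (fun y => BC h a b c y)
    have e1 : RelP p h a b σ c ^ p = ((F.card : ZMod p) ^ (p - 1)) • gone p Y := by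
      have e2 : RelP p h a b σ c * RelP p h a b σ c = RelP p h a b σ c * gone p Y := by
        rw [← hsum c, mul_add, S.RelP_mul, add_zero]
      have e3 : RelP p h a b σ c ^ p = RelP p h a b σ c ^ (p - 1) * gone p Y := by
        have gen : ∀ m : ℕ, RelP p h a b σ c ^ (m + 2) = RelP p h a b σ c ^ (m + 1) * gone p Y := by
          intro m
          rw [pow_succ, pow_succ, mul_assoc, e2, ← mul_assoc, ← pow_succ]
        have h2 := hp.two_le
        have := gen (p - 2)
        rwa [show p - 2 + 2 = p by omega, show p - 2 + 1 = p - 1 by omega] at this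
      rw [e3, hR c]
      exact sum_ge_pow_mul_gone p F (fun y => y) (p - 1)
    rw [hR c] at e1
    have e2 := sum_ge_pow p F (fun y => y)
    rw [e1] at e2
    have e3 : ∀ z, ((F.filter (fun y => p • y = z)).card : ZMod p) = (F.card : ZMod p) ^ (p - 1) := by
      intro z
      rw [← coeff_sum_ge p F (fun y => p • y) z, ← e2, AddMonoidAlgebra.coeff_smul_apply,
        coeff_gone, smul_eq_mul, mul_one]
    have e4 : F.filter (fun y => p • y = p • y0) = {y0} := by
      ext z
      simp only [Finset.mem_filter, Finset.mem_univ, true_and, Finset.mem_singleton, F]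
      constructor
      · rintro ⟨_, e⟩; exact hinj _ _ e
      · rintro rfl; exact ⟨h0, rfl⟩
    have e5 := e3 (p • y1)
    rw [← e3 (p • y0), e4] at e5
    have e6 : (F.filter (fun y => p • y = p • y1)).Nonempty := by
      rw [Finset.nonempty_iff_ne_empty]
      intro hem
      rw [hem] at e5
      simp at e5
    obtain ⟨z, hz⟩ := e6
    simp only [Finset.mem_filter, Finset.mem_univ, true_and, F] at hz
    rw [← hinj _ _ hz.2]; exact hz.1
  by_contra hcon
  push Not at hcon
  obtain ⟨⟨c', y', h1⟩, ⟨c, y, h2⟩⟩ := hcon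
  have h3 : BC h a b c y := (S.dich c y).resolve_right h2
  have h4 : ∀ y, BC h a b c y := hall c ⟨y, h3⟩
  have h5 : ∀ y, ¬ BC h a b c' y := fun z hz => h1 (hall c' ⟨z, hz⟩ y')
  have r1 : RelP p h a b σ c = gone p Y := by
    ext z; rw [S.coeffRelP hp σ hσ, if_pos (h4 z), coeff_gone]
  have r2 : RelP p h b a σ c' = gone p Y := by
    ext z
    rw [S.symm.coeffRelP hp σ hσ, if_pos ((S.dich c' z).resolve_left (h5 z)), coeff_gone]
  have r3 := S.RelP_mul σ c c'
  rw [r1, r2] at r3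
  have r4 := sum_ge_mul_gone p (Finset.univ : Finset Y) (fun y => y)
  have r5 : (gone p Y) * (gone p Y) = _ := r4
  rw [r3] at r5
  have r6 := congrArg (fun x => x.coeff y) r5
  rw [AddMonoidAlgebra.coeff_smul_apply, coeff_gone] at r6
  simp only [AddMonoidAlgebra.coeff_zero, Finsupp.coe_zero, Pi.zero_apply, smul_eq_mul, mul_one,
    Finset.card_univ] at r6
  exact hY ((ZMod.natCast_eq_zero_iff _ _).1 r6.symm)

theorem Setup.reduce (S : Setup p h a b) (hp : p.Prime) (H : ∀ c y, BC h a b c y) (σ : Xb → X)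
    (hσ : ∀ c, h (σ c) = c) :
    Til (fun i : {i // σ (h (a i).1) = (a i).1} => ((h (a i).1, (a i).2) : Xb × Y))
      (fun j => ((h (b j).1, (b j).2) : Xb × Y)) := by
  constructor
  · rintro ⟨⟨i, hi⟩, j⟩ ⟨⟨i', hi'⟩, j'⟩ e
    have e1 := congrArg Prod.fst e
    have e2 := congrArg Prod.snd e
    simp only [Prod.fst_add, Prod.snd_add] at e1 e2
    have l : Ln h a b _ _ i j := ⟨e1, e2⟩
    have l' : Ln h a b (h (a i').1 + h (b j').1) ((a i').2 + (b j').2) i' j' := ⟨rfl, rfl⟩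
    have eb := H _ _ _ _ _ _ l l'
    have eh := (S.class_const l l').1
    have ea : (a i).1 = (a i').1 := by rw [← hi, ← hi', eh]
    have : i = i' ∧ j = j' := by
      by_contra hne
      have := S.spl _ _ _ _ _ _ l l' hne
      tauto
    obtain ⟨rfl, rfl⟩ := this
    rfl
  · rintro ⟨c, y⟩
    obtain ⟨i, j, l⟩ := S.exists_ln hp c y
    obtain ⟨i', j', l', hx⟩ := S.sweep (H c y) l (σ (h (a i).1)) (hσ _)
    exact ⟨(⟨i', by rw [hx, hσ]⟩, j'), Prod.ext l'.1 l'.2⟩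

end

/-! ### Sections -/

section
variable {X Xb Y ι κ : Type} [AddCommGroup X] [AddCommGroup Xb] [AddCommGroup Y]
    [Fintype X] [Fintype Xb] [DecidableEq Xb] [DecidableEq X] [DecidableEq Y] [Fintype Y]
    [Fintype ι] [Fintype κ] {p : ℕ}
    {h : X →+ Xb} {a : ι → X × Y} {b : κ → X × Y}

theorem sec_sum (h : X →+ Xb) (v : ι → X) (F : ι → ℂ) (σ : Xb → X) (hσ : ∀ c, h (σ c) = c) :
    ∑ i ∈ Finset.univ.filter (fun i => σ (h (v i)) = v i), F i =
      ∑ c, ∑ i ∈ Finset.univ.filter (fun i => v i = σ c), F i := by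
  rw [← Finset.sum_fiberwise (Finset.univ.filter (fun i => σ (h (v i)) = v i)) (fun i => h (v i)) F]
  refine Finset.sum_congr rfl fun c _ => ?_
  rw [Finset.filter_filter]
  refine Finset.sum_congr ?_ fun _ _ => rfl
  ext i
  simp only [Finset.mem_filter, Finset.mem_univ, true_and]
  constructor
  · rintro ⟨e1, e2⟩; rw [← e1, e2]
  · intro e
    rw [e, hσ]; exact ⟨rfl, rfl⟩

theorem sec_const (h : X →+ Xb) (hs : Function.Surjective h) (v : ι → X) (F : ι → ℂ) (C : ℂ)
    (H : ∀ σ : Xb → X, (∀ c, h (σ c) = c) →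
      ∑ i ∈ Finset.univ.filter (fun i => σ (h (v i)) = v i), F i = C)
    (x x' : X) (hx : h x = h x') :
    ∑ i ∈ Finset.univ.filter (fun i => v i = x), F i =
      ∑ i ∈ Finset.univ.filter (fun i => v i = x'), F i := by
  obtain ⟨σ, hσ⟩ := hs.hasRightInverse
  have key : ∀ w : X, h w = h x → ∑ i ∈ Finset.univ.filter (fun i => v i = w), F i +
      ∑ c ∈ Finset.univ.erase (h x), ∑ i ∈ Finset.univ.filter (fun i => v i = σ c), F i = C := by
    intro w hw
    have hσ' : ∀ c, h (Function.update σ (h x) w c) = c := by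
      intro c
      by_cases hc : c = h x
      · subst hc; simp [hw]
      · rw [Function.update_of_ne hc]; exact hσ c
    have := H _ hσ'
    rw [sec_sum h v F _ hσ', ← Finset.add_sum_erase _ _ (Finset.mem_univ (h x))] at this
    rw [← this]
    congr 1
    · simp
    · refine Finset.sum_congr rfl fun c hc => ?_
      rw [Function.update_of_ne (Finset.ne_of_mem_erase hc)]
  exact add_right_cancel ((key x rfl).trans (key x' hx.symm).symm)

theorem sec_class (h : X →+ Xb) (hs : Function.Surjective h)
    (hf : ∀ c, (Finset.univ.filter (fun x => h x = c)).card = p) (v : ι → X) (F : ι → ℂ) (C : ℂ)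
    (H : ∀ σ : Xb → X, (∀ c, h (σ c) = c) →
      ∑ i ∈ Finset.univ.filter (fun i => σ (h (v i)) = v i), F i = C) (x : X) :
    ∑ i ∈ Finset.univ.filter (fun i => h (v i) = h x), F i =
      p * ∑ i ∈ Finset.univ.filter (fun i => v i = x), F i := by
  have e : ∑ i ∈ Finset.univ.filter (fun i => h (v i) = h x), F i =
      ∑ w ∈ Finset.univ.filter (fun w => h w = h x),
        ∑ i ∈ Finset.univ.filter (fun i => v i = w), F i := by
    rw [← Finset.sum_fiberwise_of_maps_to (g := v) (t := Finset.univ.filter (fun w => h w = h x))]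
    · refine Finset.sum_congr rfl fun w hw => ?_
      rw [Finset.filter_filter]
      refine Finset.sum_congr ?_ fun _ _ => rfl
      ext i
      simp only [Finset.mem_filter, Finset.mem_univ, true_and] at hw ⊢
      constructor
      · tauto
      · rintro rfl; exact ⟨hw, rfl⟩
    · intro i hi
      simpa using hi
  rw [e, Finset.sum_congr rfl (g := fun _ => ∑ i ∈ Finset.univ.filter (fun i => v i = x), F i)]
  · rw [Finset.sum_const, hf, nsmul_eq_mul]
  · intro w hw
    simp only [Finset.mem_filter, Finset.mem_univ, true_and] at hw
    exact sec_const h hs v F C H w x hw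

theorem sec_total (h : X →+ Xb) (hs : Function.Surjective h)
    (hf : ∀ c, (Finset.univ.filter (fun x => h x = c)).card = p) (v : ι → X) (F : ι → ℂ) (C : ℂ)
    (H : ∀ σ : Xb → X, (∀ c, h (σ c) = c) →
      ∑ i ∈ Finset.univ.filter (fun i => σ (h (v i)) = v i), F i = C) :
    ∑ i, F i = p * C := by
  obtain ⟨σ, hσ⟩ := hs.hasRightInverse
  rw [← H σ hσ, sec_sum h v F σ hσ, Finset.mul_sum,
    ← Finset.sum_fiberwise Finset.univ (fun i => h (v i)) F]
  refine Finset.sum_congr rfl fun c _ => ?_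
  rw [← sec_class h hs hf v F C H (σ c), hσ c]

/-- twisted sum vanishes -/
theorem sec_twist (h : X →+ Xb) (hs : Function.Surjective h)
    (v : ι → X) (F : ι → ℂ) (C : ℂ)
    (H : ∀ σ : Xb → X, (∀ c, h (σ c) = c) →
      ∑ i ∈ Finset.univ.filter (fun i => σ (h (v i)) = v i), F i = C) (ψ : AddChar X ℂ)
    (k : X) (hk : h k = 0) (hψ : ψ k ≠ 1) :
    ∑ i, F i * ψ (v i) = 0 := by
  have e : ∑ i, F i * ψ (v i) =
      ∑ x, (∑ i ∈ Finset.univ.filter (fun i => v i = x), F i) * ψ x := by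
    rw [← Finset.sum_fiberwise Finset.univ v]
    refine Finset.sum_congr rfl fun x _ => ?_
    rw [Finset.sum_mul]
    refine Finset.sum_congr rfl fun i hi => ?_
    rw [(Finset.mem_filter.1 hi).2]
  have e2 : ψ k * ∑ i, F i * ψ (v i) = ∑ i, F i * ψ (v i) := by
    rw [e]
    conv_rhs => rw [← Equiv.sum_comp (Equiv.addRight k)]
    rw [Finset.mul_sum]
    refine Finset.sum_congr rfl fun x _ => ?_
    rw [Equiv.coe_addRight, sec_const h hs v F C H (x + k) x (by simp [hk]), AddChar.map_add_eq_mul]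
    ring
  have e3 : (ψ k - 1) * ∑ i, F i * ψ (v i) = 0 := by rw [sub_mul, e2]; ring
  exact (mul_eq_zero.1 e3).resolve_left (sub_ne_zero.2 hψ)

theorem Setup.sec_card (S : Setup p h a b) (hp : p.Prime) (H : ∀ c y, BC h a b c y) (σ : Xb → X)
    (hσ : ∀ c, h (σ c) = c) :
    (Finset.univ.filter (fun i => σ (h (a i).1) = (a i).1)).card * Fintype.card κ
      = Fintype.card Xb * Fintype.card Y := by
  have := (S.reduce hp H σ hσ).card
  rwa [Fintype.card_subtype, Fintype.card_prod] at this

theorem Setup.sec_card' (S : Setup p h a b) (hp : p.Prime) (H : ∀ c y, BC h a b c y) (σ : Xb → X)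
    (hσ : ∀ c, h (σ c) = c) :
    ∑ i ∈ Finset.univ.filter (fun i => σ (h (a i).1) = (a i).1), (1 : ℂ)
      = (Fintype.card Xb * Fintype.card Y : ℕ) / (Fintype.card κ : ℂ) := by
  have h1 := S.sec_card hp H σ hσ
  have h2 : (Fintype.card κ : ℂ) ≠ 0 := by
    intro h0
    have h0 : Fintype.card κ = 0 := by exact_mod_cast h0
    rw [h0, mul_zero] at h1
    have := Fintype.card_pos (α := Xb)
    have := Fintype.card_pos (α := Y)
    have := Nat.mul_pos ‹0 < Fintype.card Xb› this
    omega
  rw [eq_div_iff h2, ← h1]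
  simp

theorem Setup.col_b (S : Setup p h a b) (hp : p.Prime) (hs : Function.Surjective h)
    (H : ∀ c y, BC h b a c y) (c : Xb) :
    p ∣ (Finset.univ.filter (fun j => h (b j).1 = c)).card := by
  obtain ⟨x, rfl⟩ := hs c
  have := sec_class h hs S.fib (fun j => (b j).1) (fun _ => 1) _
    (fun σ hσ => S.symm.sec_card' hp H σ hσ) x
  simp only [Finset.sum_const, nsmul_eq_mul, mul_one] at this
  exact ⟨_, by exact_mod_cast this⟩

theorem Setup.col_a (S : Setup p h a b) (hp : p.Prime) (hs : Function.Surjective h)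
    (hY : ¬ p ∣ Fintype.card Y)
    (H : ∀ c y, BC h a b c y) :
    ∃ c, ¬ p ∣ (Finset.univ.filter (fun j => h (b j).1 = c)).card := by
  by_contra hcon
  push Not at hcon
  obtain ⟨σ, hσ⟩ := hs.hasRightInverse
  have T := S.reduce hp H σ hσ
  apply hY
  have e : Fintype.card Y = (Finset.univ.sigma (fun i : {i // σ (h (a i).1) = (a i).1} =>
      Finset.univ.filter (fun j => h (b j).1 = - h (a i).1))).card := by
    rw [← Finset.card_univ]
    symm
    refine Finset.card_bij (fun q _ => (a q.1).2 + (b q.2).2) (fun _ _ => Finset.mem_univ _) ?_ ?_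
    · rintro ⟨i, j⟩ hq ⟨i', j'⟩ hq' e
      simp only [Finset.mem_filter, Finset.mem_univ, true_and, Finset.mem_sigma] at hq hq' e
      have := @T.1 (i, j) (i', j') (Prod.ext (by simp [hq, hq']) e)
      simp only [Prod.mk.injEq] at this
      obtain ⟨rfl, rfl⟩ := this
      rfl
    · intro y _
      obtain ⟨q, hq⟩ := T.2 (0, y)
      have h1 := congrArg Prod.fst hq
      have h2 := congrArg Prod.snd hq
      simp only [Prod.fst_add, Prod.snd_add] at h1 h2
      refine ⟨⟨q.1, q.2⟩, ?_, h2⟩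
      simp only [Finset.mem_filter, Finset.mem_univ, true_and, Finset.mem_sigma]
      exact (neg_eq_of_add_eq_zero_right h1).symm
  rw [e, Finset.card_sigma]
  exact Finset.dvd_sum fun i _ => hcon _

end

/-! ### Cyclic groups -/

theorem Til.map {G H ι κ : Type} [AddCommGroup G] [AddCommGroup H] (e : G ≃+ H)
    {a : ι → G} {b : κ → G} (T : Til a b) : Til (fun i => e (a i)) (fun j => e (b j)) := by
  have : (fun x : ι × κ => e (a x.1) + e (b x.2)) = e ∘ (fun x : ι × κ => a x.1 + b x.2) := by
    funext x; simp
  unfold Til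
  rw [this]
  exact e.bijective.comp T

theorem til_crt {u m : ℕ} (hc : u.Coprime m) {ι κ : Type} (α : ι → ℤ) (β : κ → ℤ) :
    Til (fun i => (α i : ZMod (u * m))) (fun j => (β j : ZMod (u * m))) ↔
    Til (fun i => (((α i : ZMod u), (α i : ZMod m)) : ZMod u × ZMod m))
      (fun j => (((β j : ZMod u), (β j : ZMod m)) : ZMod u × ZMod m)) := by
  have key : ∀ x : ℤ, (ZMod.chineseRemainder hc).toAddEquiv (x : ZMod (u * m)) =
      (((x : ZMod u), (x : ZMod m)) : ZMod u × ZMod m) := by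
    intro x
    have := map_intCast (ZMod.chineseRemainder hc) x
    exact this
  constructor
  · intro T
    have := T.map (ZMod.chineseRemainder hc).toAddEquiv
    simpa only [key] using this
  · intro T
    have := T.map (ZMod.chineseRemainder hc).toAddEquiv.symm
    simpa only [← key, AddEquiv.symm_apply_apply] using this

/-- reduction map -/
def redHom (p n : ℕ) : ZMod (p ^ (n + 1)) →+ ZMod (p ^ n) :=
  (ZMod.castHom (pow_dvd_pow p (Nat.le_succ n)) (ZMod (p ^ n))).toAddMonoidHom

theorem redHom_intCast (p n : ℕ) (x : ℤ) :
    redHom p n (x : ZMod (p ^ (n + 1))) = (x : ZMod (p ^ n)) :=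
  map_intCast (ZMod.castHom (pow_dvd_pow p (Nat.le_succ n)) (ZMod (p ^ n))) x

theorem redHom_surj (p n : ℕ) : Function.Surjective (redHom p n) := by
  intro c
  obtain ⟨x, rfl⟩ := ZMod.intCast_surjective c
  exact ⟨x, redHom_intCast p n x⟩

theorem redHom_fib (p n : ℕ) (hp : p.Prime) [NeZero (p ^ (n + 1))] (c : ZMod (p ^ n)) :
    (Finset.univ.filter (fun x => redHom p n x = c)).card = p := by
  have : NeZero (p ^ n) := ⟨pow_ne_zero _ hp.ne_zero⟩
  have hall : ∀ d, (Finset.univ.filter (fun x => redHom p n x = d)).card =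
      (Finset.univ.filter (fun x => redHom p n x = c)).card := by
    intro d
    obtain ⟨w, hw⟩ := redHom_surj p n (c - d)
    refine Finset.card_bij (fun x _ => x + w) ?_ ?_ ?_
    · intro x hx
      simp only [Finset.mem_filter, Finset.mem_univ, true_and] at hx ⊢
      rw [map_add, hx, hw]; abel
    · intro x _ y _ e; exact add_right_cancel e
    · intro x hx
      simp only [Finset.mem_filter, Finset.mem_univ, true_and] at hx
      refine ⟨x - w, ?_, by abel⟩
      simp only [Finset.mem_filter, Finset.mem_univ, true_and]
      rw [map_sub, hx, hw]; abel
  have h1 := Finset.card_eq_sum_card_fiberwise (s := Finset.univ) (t := Finset.univ)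
    (f := redHom p n) (fun _ _ => Finset.mem_univ _)
  rw [Finset.sum_congr rfl (fun d _ => hall d), Finset.sum_const, Finset.card_univ,
    Finset.card_univ, ZMod.card, ZMod.card, smul_eq_mul] at h1
  exact (Nat.eq_of_mul_eq_mul_left (pow_pos hp.pos n) ((pow_succ p n).symm.trans h1)).symm

theorem mk_setup (p n m : ℕ) (hp : p.Prime) (hm : ¬ p ∣ m) [NeZero m] [NeZero (p ^ (n + 1))]
    {ι κ : Type} [Fintype ι] [Fintype κ] (α : ι → ℤ) (β : κ → ℤ)
    (T : Til (fun i => (α i : ZMod (p ^ (n + 1) * m))) (fun j => (β j : ZMod (p ^ (n + 1) * m)))) :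
    Setup p (redHom p n)
      (fun i => (((α i : ZMod (p ^ (n + 1))), (α i : ZMod m)) : ZMod (p ^ (n + 1)) × ZMod m))
      (fun j => (((β j : ZMod (p ^ (n + 1))), (β j : ZMod m)) : ZMod (p ^ (n + 1)) × ZMod m)) := by
  have hc : (p ^ (n + 1)).Coprime m := Nat.Coprime.pow_left _ ((Nat.Prime.coprime_iff_not_dvd hp).2 hm)
  have T' := (til_crt hc α β).1 T
  refine ⟨T', ?_, redHom_fib p n hp⟩
  rintro i j i' j' c y ⟨h1, h2⟩ ⟨h3, h4⟩ hne
  simp only at h1 h2 h3 h4 ⊢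
  by_cases ea : (α i : ZMod (p ^ (n + 1))) = α i'
  · left
    refine ⟨ea, fun eb => hne ?_⟩
    have := @T'.1 (i, j) (i', j') (Prod.ext (by simp [ea, eb]) (by simp [h2, h4]))
    simpa using this
  · right
    refine ⟨ea, ?_⟩
    by_contra eb
    have d1 : ¬ ((p : ℤ) ^ (n + 1) ∣ α i - α i') := by
      intro hd
      apply ea
      rw [← sub_eq_zero, ← Int.cast_sub, ZMod.intCast_zmod_eq_zero_iff_dvd]
      exact_mod_cast hd
    have d2 : ¬ ((p : ℤ) ^ (n + 1) ∣ β j - β j') := by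
      intro hd
      apply eb
      rw [← sub_eq_zero, ← Int.cast_sub, ZMod.intCast_zmod_eq_zero_iff_dvd]
      exact_mod_cast hd
    have d3 : (p : ℤ) ^ n ∣ (α i - α i') + (β j - β j') := by
      rw [← h3, redHom_intCast, redHom_intCast, redHom_intCast, redHom_intCast] at h1
      have : (((α i - α i') + (β j - β j') : ℤ) : ZMod (p ^ n)) = 0 := by
        push_cast
        linear_combination h1
      rw [ZMod.intCast_zmod_eq_zero_iff_dvd] at this
      exact_mod_cast this
    obtain ⟨r, hr1, hr2⟩ := exists_unit_aux p n hp _ _ d1 d2 d3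
    obtain ⟨s, hs1, hs2⟩ := Nat.chineseRemainder hc r 1
    have c1 : s.Coprime (p ^ (n + 1)) := by
      have := hs1.gcd_eq
      unfold Nat.Coprime
      rw [this]; exact hr1
    have c2 : s.Coprime m := by
      have := hs2.gcd_eq
      unfold Nat.Coprime
      rw [this]; simp
    have T2 := Til.dil s (G := ZMod (p ^ (n + 1)) × ZMod m) (by
      rw [Fintype.card_prod, ZMod.card, ZMod.card]
      exact Nat.Coprime.mul_right c1 c2) T'
    have hs1' : (s : ZMod (p ^ (n + 1))) = r := (ZMod.natCast_eq_natCast_iff _ _ _).2 hs1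
    have hs2' : (s : ZMod m) = 1 := by
      have := (ZMod.natCast_eq_natCast_iff _ _ _).2 hs2
      simpa using this
    have e1 : ((α i - α i' + r * (β j - β j') : ℤ) : ZMod (p ^ (n + 1))) = 0 := by
      rw [ZMod.intCast_zmod_eq_zero_iff_dvd]
      exact_mod_cast hr2
    have := @T2.1 (i, j) (i', j') (Prod.ext (by
        simp only [Prod.fst_add, Prod.smul_mk, nsmul_eq_mul, hs1']
        push_cast at e1
        linear_combination e1) (by
        simp only [Prod.snd_add, Prod.smul_mk, nsmul_eq_mul, hs2', one_mul]
        exact h2.trans h4.symm))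
    simp only [Prod.mk.injEq] at this
    exact ea (by rw [this.1])

/-- The inductive claim. -/
def Claim (M : ℕ) : Prop :=
  ∀ (κ : Type) [Fintype κ] (β : κ → ℤ), ∃ L : Finset ℤ, ∀ (ι : Type) [Fintype ι] (α : ι → ℤ),
    Til (fun i => (α i : ZMod M)) (fun j => (β j : ZMod M)) →
    L.card * Fintype.card κ = M ∧ ∀ l ∈ L, ∀ l' ∈ L, l ≠ l' →
      ∑ i, Complex.exp (2 * (Real.pi : ℂ) * Complex.I * (((l - l') * α i : ℤ) : ℂ) / (M : ℂ)) = 0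

theorem claim_one : Claim 1 := by
  intro κ _ β
  refine ⟨{0}, fun ι _ α T => ⟨?_, ?_⟩⟩
  · have := T.card
    rw [ZMod.card] at this
    simp [(mul_eq_one.1 this).2]
  · intro l hl l' hl' hne
    simp only [Finset.mem_singleton] at hl hl'
    exact absurd (hl.trans hl'.symm) hne

theorem exp_split (p n m : ℕ) (hp : p ≠ 0) (hm : m ≠ 0) (μ j x : ℤ) :
    Complex.exp (2 * (Real.pi : ℂ) * Complex.I * (((p * μ + j * m) * x : ℤ) : ℂ) /
      ((p ^ (n + 1) * m : ℕ) : ℂ)) =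
    Complex.exp (2 * (Real.pi : ℂ) * Complex.I * ((μ * x : ℤ) : ℂ) / ((p ^ n * m : ℕ) : ℂ)) *
    Complex.exp (2 * (Real.pi : ℂ) * Complex.I * ((j * x : ℤ) : ℂ) / ((p ^ (n + 1) : ℕ) : ℂ)) := by
  rw [← Complex.exp_add]
  congr 1
  have h1 : (p : ℂ) ≠ 0 := by exact_mod_cast hp
  have h2 : (m : ℂ) ≠ 0 := by exact_mod_cast hm
  push_cast
  field_simp
  ring

theorem claim_step (p n m : ℕ) (hp : p.Prime) (hm : ¬ p ∣ m) (hm0 : m ≠ 0)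
    (ih : Claim (p ^ n * m)) : Claim (p ^ (n + 1) * m) := by
  classical
  have i1 : NeZero m := ⟨hm0⟩
  have i2 : NeZero (p ^ (n + 1)) := ⟨pow_ne_zero _ hp.ne_zero⟩
  have i3 : NeZero (p ^ n) := ⟨pow_ne_zero _ hp.ne_zero⟩
  have i4 : NeZero (p ^ n * m) := ⟨mul_ne_zero (pow_ne_zero _ hp.ne_zero) hm0⟩
  have i5 : NeZero (p ^ (n + 1) * m) := ⟨mul_ne_zero (pow_ne_zero _ hp.ne_zero) hm0⟩
  have hc : (p ^ n).Coprime m := Nat.Coprime.pow_left _ ((Nat.Prime.coprime_iff_not_dvd hp).2 hm)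
  have hY : ¬ p ∣ Fintype.card (ZMod m) := by rwa [ZMod.card]
  have hs := redHom_surj p n
  have hp0 : (p : ℤ) ≠ 0 := by exact_mod_cast hp.ne_zero
  intro κ _ β
  by_cases hcol : ∀ c, p ∣ (Finset.univ.filter
      (fun j => redHom p n (β j : ZMod (p ^ (n + 1))) = c)).card
  · -- colour B
    obtain ⟨σ, hσ⟩ := hs.hasRightInverse
    obtain ⟨L, hL⟩ := ih {j // σ (redHom p n (β j : ZMod (p ^ (n + 1)))) = (β j : ZMod (p ^ (n + 1)))}
      (fun j => β j)
    refine ⟨L.image (fun l => (p : ℤ) * l), fun ι _ α T => ?_⟩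
    have S := mk_setup p n m hp hm α β T
    have U : ∀ c y, BC (redHom p n) _ _ c y := (S.uniform hp hs hY).resolve_left (fun H => by
      obtain ⟨c, hc'⟩ := S.col_a hp hs hY H
      exact hc' (hcol c))
    have R := (S.symm.reduce hp U σ hσ).symm
    simp only [redHom_intCast] at R
    have R' := (til_crt hc α (fun j : {j // σ (redHom p n (β j : ZMod (p ^ (n + 1)))) =
      (β j : ZMod (p ^ (n + 1)))} => β j)).2 (by simpa only [redHom_intCast] using R)
    obtain ⟨hL1, hL2⟩ := hL ι α R'
    have hinj : Function.Injective (fun l : ℤ => (p : ℤ) * l) := fun x y e =>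
      mul_left_cancel₀ hp0 e
    constructor
    · rw [Finset.card_image_of_injective _ hinj]
      have c1 := T.card
      have c2 := R'.card
      rw [ZMod.card] at c1 c2
      have hι : 0 < Fintype.card ι := by
        rcases Nat.eq_zero_or_pos (Fintype.card ι) with h0 | h0
        · rw [h0, zero_mul] at c1; exact absurd c1.symm i5.ne
        · exact h0
      have c3 : Fintype.card κ = p * Fintype.card {j // σ (redHom p n (β j : ZMod (p ^ (n + 1)))) =
          (β j : ZMod (p ^ (n + 1)))} := by
        apply Nat.eq_of_mul_eq_mul_left hι
        rw [c1, mul_left_comm, c2]; ring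
      rw [c3, mul_left_comm, hL1]; ring
    · intro l hl l' hl' hne
      obtain ⟨k, hk, rfl⟩ := Finset.mem_image.1 hl
      obtain ⟨k', hk', rfl⟩ := Finset.mem_image.1 hl'
      rw [← hL2 k hk k' hk' (fun e => hne (by rw [e]))]
      refine Finset.sum_congr rfl fun i _ => ?_
      have := exp_split p n m hp.ne_zero hm0 (k - k') 0 (α i)
      simp only [zero_mul, Int.cast_zero, mul_zero, zero_div, Complex.exp_zero, mul_one,
        add_zero] at this
      rw [← this]
      congr 3
      push_cast; ring
  · -- colour A
    obtain ⟨L, hL⟩ := ih κ β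
    refine ⟨(L ×ˢ Finset.range p).image (fun q => (p : ℤ) * q.1 + (q.2 : ℤ) * m), fun ι _ α T => ?_⟩
    have S := mk_setup p n m hp hm α β T
    have U : ∀ c y, BC (redHom p n) _ _ c y := (S.uniform hp hs hY).resolve_right (fun H =>
      hcol (fun c => S.col_b hp hs H c))
    have R' : ∀ σ : ZMod (p ^ n) → ZMod (p ^ (n + 1)), (∀ c, redHom p n (σ c) = c) →
        Til (fun i : {i // σ (redHom p n (α i : ZMod (p ^ (n + 1)))) = (α i : ZMod (p ^ (n + 1)))} =>
          (α i : ZMod (p ^ n * m))) (fun j => (β j : ZMod (p ^ n * m))) := by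
      intro σ hσ
      have R := S.reduce hp U σ hσ
      simp only [redHom_intCast] at R
      exact (til_crt hc (fun i : {i // σ (redHom p n (α i : ZMod (p ^ (n + 1)))) =
        (α i : ZMod (p ^ (n + 1)))} => α i) β).2 (by simpa only [redHom_intCast] using R)
    have hpm : IsCoprime (p : ℤ) (m : ℤ) :=
      Nat.isCoprime_iff_coprime.2 ((Nat.Prime.coprime_iff_not_dvd hp).2 hm)
    have hdvd : ∀ j j' : ℕ, j < p → j' < p → (p : ℤ) ∣ (j : ℤ) - j' → j = j' := by
      intro j j' h1 h2 h3
      have : ((j' : ℕ) : ZMod p) = (j : ZMod p) := by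
        have := (ZMod.intCast_zmod_eq_zero_iff_dvd _ p).2 h3
        push_cast at this
        exact (sub_eq_zero.1 this).symm
      rw [ZMod.natCast_eq_natCast_iff'] at this
      rw [Nat.mod_eq_of_lt h1, Nat.mod_eq_of_lt h2] at this
      exact this.symm
    have hinj : Set.InjOn (fun q : ℤ × ℕ => (p : ℤ) * q.1 + (q.2 : ℤ) * m)
        (L ×ˢ Finset.range p : Finset (ℤ × ℕ)) := by
      rintro ⟨l, j⟩ h1 ⟨l', j'⟩ h2 e
      simp only [Finset.coe_product, Set.mem_prod, Finset.mem_coe, Finset.mem_range] at h1 h2 e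
      have hd : (p : ℤ) ∣ ((j : ℤ) - j') * m := ⟨l' - l, by linear_combination e⟩
      have hj := hdvd j j' h1.2 h2.2 (hpm.dvd_of_dvd_mul_right hd)
      subst hj
      have : (p : ℤ) * l = p * l' := by linear_combination e
      rw [mul_left_cancel₀ hp0 this]
    constructor
    · rw [Finset.card_image_of_injOn hinj, Finset.card_product, Finset.card_range]
      obtain ⟨σ, hσ⟩ := hs.hasRightInverse
      have := (hL _ _ (R' σ hσ)).1
      rw [mul_right_comm, this]; ring
    · intro l hl l' hl' hne
      obtain ⟨⟨k, j⟩, hk, rfl⟩ := Finset.mem_image.1 hl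
      obtain ⟨⟨k', j'⟩, hk', rfl⟩ := Finset.mem_image.1 hl'
      simp only [Finset.mem_product, Finset.mem_range] at hk hk'
      have hsec : ∃ C : ℂ, (k ≠ k' → C = 0) ∧ ∀ σ : ZMod (p ^ n) → ZMod (p ^ (n + 1)),
          (∀ c, redHom p n (σ c) = c) →
          ∑ i ∈ Finset.univ.filter (fun i => σ (redHom p n (α i : ZMod (p ^ (n + 1)))) =
            (α i : ZMod (p ^ (n + 1)))), Complex.exp (2 * (Real.pi : ℂ) * Complex.I *
              (((k - k') * α i : ℤ) : ℂ) / ((p ^ n * m : ℕ) : ℂ)) = C := by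
        by_cases hkk : k = k'
        · refine ⟨(Fintype.card (ZMod (p ^ n)) * Fintype.card (ZMod m) : ℕ) / (Fintype.card κ : ℂ),
            fun hh => absurd hkk hh, fun σ hσ => ?_⟩
          rw [← S.sec_card' hp U σ hσ]
          refine Finset.sum_congr rfl fun i _ => ?_
          simp [hkk]
        · refine ⟨0, fun _ => rfl, fun σ hσ => ?_⟩
          have := (hL _ _ (R' σ hσ)).2 k hk.1 k' hk'.1 hkk
          rw [← this]
          exact Finset.sum_subtype _ (by simp) _
      obtain ⟨C, hC0, hC⟩ := hsec
      have hsum : ∀ i, Complex.exp (2 * (Real.pi : ℂ) * Complex.I *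
          (((((p : ℤ) * k + (j : ℤ) * m) - ((p : ℤ) * k' + (j' : ℤ) * m)) * α i : ℤ) : ℂ) /
            ((p ^ (n + 1) * m : ℕ) : ℂ)) =
          Complex.exp (2 * (Real.pi : ℂ) * Complex.I *
              (((k - k') * α i : ℤ) : ℂ) / ((p ^ n * m : ℕ) : ℂ)) *
          (ZMod.stdAddChar.mulShift ((j - j' : ℤ) : ZMod (p ^ (n + 1))))
            (α i : ZMod (p ^ (n + 1))) := by
        intro i
        rw [AddChar.mulShift_apply, ← Int.cast_mul, ZMod.stdAddChar_coe,
          ← exp_split p n m hp.ne_zero hm0]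
        congr 3
        push_cast; ring
      rw [Finset.sum_congr rfl fun i _ => hsum i]
      by_cases hjj : j = j'
      · subst hjj
        have hkk : k ≠ k' := fun e => hne (by rw [e])
        have := sec_total (redHom p n) hs S.fib (fun i => (α i : ZMod (p ^ (n + 1)))) _ C hC
        rw [hC0 hkk, mul_zero] at this
        simpa using this
      · refine sec_twist (redHom p n) hs (fun i => (α i : ZMod (p ^ (n + 1)))) _ C hC _
          (((p : ℤ) ^ n : ℤ) : ZMod (p ^ (n + 1))) ?_ ?_
        · rw [redHom_intCast, ZMod.intCast_zmod_eq_zero_iff_dvd]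
          push_cast; exact dvd_rfl
        · rw [AddChar.mulShift_apply]
          intro e
          rw [← AddChar.map_zero_eq_one (ZMod.stdAddChar (N := p ^ (n + 1)))] at e
          have e := ZMod.injective_stdAddChar e
          rw [← Int.cast_mul, ZMod.intCast_zmod_eq_zero_iff_dvd] at e
          push_cast at e
          rw [pow_succ', mul_dvd_mul_iff_right (pow_ne_zero _ hp0)] at e
          exact hjj (hdvd j j' hk.2 hk'.2 e)

theorem claim_all (M : ℕ) (hM : M ≠ 0) : Claim M := by
  induction M using Nat.strong_induction_on with
  | _ M ih =>
    by_cases h1 : M = 1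
    · subst h1; exact claim_one
    · obtain ⟨p, hp, hd⟩ := Nat.exists_prime_and_dvd h1
      obtain ⟨e, m, hm, hM'⟩ := Nat.exists_eq_pow_mul_and_not_dvd hM p hp.ne_one
      have he : e ≠ 0 := by
        rintro rfl
        apply hm
        rw [hM'] at hd; simpa using hd
      obtain ⟨n, rfl⟩ := Nat.exists_eq_succ_of_ne_zero he
      have hm0 : m ≠ 0 := by
        rintro rfl; simp at hm
      rw [hM']
      refine claim_step p n m hp hm hm0 (ih _ ?_ ?_)
      · rw [hM', Nat.succ_eq_add_one, pow_succ]
        have h3 : 0 < p ^ n * m := Nat.mul_pos (pow_pos hp.pos n) (Nat.pos_of_ne_zero hm0)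
        have := hp.two_le
        nlinarith
      · exact mul_ne_zero (pow_ne_zero _ hp.ne_zero) hm0

theorem tiling_spectral (M : ℕ) (hM : M ≠ 0) (A B : Finset (ZMod M))
    (hT : IsTiling M (A : Set (ZMod M)) (B : Set (ZMod M))) : IsSpectral M A := by
  classical
  have : NeZero M := ⟨hM⟩
  obtain ⟨L, hL⟩ := claim_all M hM {b // b ∈ B} (fun b => (b.1.val : ℤ))
  have T : Til (fun a : {a // a ∈ A} => (((a.1.val : ℤ)) : ZMod M))
      (fun b : {b // b ∈ B} => (((b.1.val : ℤ)) : ZMod M)) := by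
    have hv : ∀ z : ZMod M, (((z.val : ℤ)) : ZMod M) = z := fun z => by simp
    simp only [hv]
    constructor
    · rintro ⟨⟨a, ha⟩, ⟨b, hb⟩⟩ ⟨⟨a', ha'⟩, ⟨b', hb'⟩⟩ e
      have := (hT (a' + b')).unique (y₁ := (a, b)) (y₂ := (a', b')) ⟨ha, hb, e⟩ ⟨ha', hb', rfl⟩
      simp only [Prod.mk.injEq] at this
      obtain ⟨rfl, rfl⟩ := this
      rfl
    · intro z
      obtain ⟨⟨a, b⟩, ⟨ha, hb, e⟩, _⟩ := hT z
      exact ⟨(⟨a, ha⟩, ⟨b, hb⟩), e⟩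
  obtain ⟨h1, h2⟩ := hL _ _ T
  have hc := T.card
  rw [ZMod.card] at hc
  simp only [Fintype.card_coe] at hc h1
  have hB : 0 < B.card := by
    rcases Nat.eq_zero_or_pos B.card with h0 | h0
    · rw [h0, mul_zero] at hc; exact absurd hc.symm hM
    · exact h0
  have hA : A.card ≠ 0 := by
    intro h0; rw [h0, zero_mul] at hc; exact hM hc.symm
  have hsum : ∀ l l' : ℤ, (∑ a ∈ A, Complex.exp (2 * (Real.pi : ℂ) * Complex.I *
      ((((l : ZMod M) - (l' : ZMod M)) * a).val : ℂ) / (M : ℂ))) =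
      ∑ a : {a // a ∈ A}, Complex.exp (2 * (Real.pi : ℂ) * Complex.I *
      (((l - l') * (a.1.val : ℤ) : ℤ) : ℂ) / (M : ℂ)) := by
    intro l l'
    rw [← Finset.sum_coe_sort]
    refine Finset.sum_congr rfl fun a _ => ?_
    rw [← ZMod.toCircle_apply, ← ZMod.stdAddChar_apply, ← ZMod.stdAddChar_coe]
    congr 1
    push_cast
    simp
  have hinj : Set.InjOn (fun l : ℤ => (l : ZMod M)) L := by
    intro l hl l' hl' e
    by_contra hne
    have h3 := h2 l hl l' hl' hne
    rw [← hsum] at h3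
    simp only at e
    simp [e, hA] at h3
  refine ⟨L.image (fun l : ℤ => (l : ZMod M)), ?_, ?_⟩
  · rw [Finset.card_image_of_injOn hinj]
    exact Nat.eq_of_mul_eq_mul_right hB (h1.trans hc.symm)
  · intro l hl l' hl' hne
    obtain ⟨k, hk, rfl⟩ := Finset.mem_image.1 hl
    obtain ⟨k', hk', rfl⟩ := Finset.mem_image.1 hl'
    rw [hsum]
    exact h2 k hk k' hk' (fun e => hne (by rw [e]))

/-- If `M = p_i² p_j² p_k²` with `p_i, p_j, p_k` distinct odd primes and
`A ⊆ ℤ_M` tiles `ℤ_M` by translations, then `A` is spectral in `ℤ_M`. -/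
theorem statement1
    (pi pj pk : ℕ) (hpi : pi.Prime) (hpj : pj.Prime) (hpk : pk.Prime)
    (hoi : Odd pi) (hoj : Odd pj) (hok : Odd pk)
    (hij : pi ≠ pj) (hik : pi ≠ pk) (hjk : pj ≠ pk)
    (M : ℕ) (hM : M = pi ^ 2 * pj ^ 2 * pk ^ 2)
    (A : Finset (ZMod M))
    (htile : ∃ B : Finset (ZMod M), IsTiling M (A : Set (ZMod M)) (B : Set (ZMod M))) :
    IsSpectral M A := by
  obtain ⟨B, hB⟩ := htile
  refine tiling_spectral M ?_ A B hB
  rw [hM]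
  exact mul_ne_zero (mul_ne_zero (pow_ne_zero _ hpi.ne_zero) (pow_ne_zero _ hpj.ne_zero))
    (pow_ne_zero _ hpk.ne_zero)
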